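/- arXiv:1807.04940 — 2 statements merged into one kernel-verified Lean document; each statement's English description precedes it below -/
import Mathlib

section
/- Let N ≥ 3 be an integer, b > a − 2 > −N, and let p = (N + 2 + 2b − a)/(N − 2 + a). If u is a radially symmetric positive regular solution of −div(|x|^a Du) = |x|^b u^p on ℝ^N, then there exist constants c > 0 and λ > 0 such that u(x) = c·(1 + (λ|x|)^{2+b−a})^{−(N−2+a)/(2+b−a)} for all x ∈ ℝ^N. -/
open MeasureTheory Real Filter
open scoped BigOperators ENNReal NNReal RealInnerProductSpace

noncomputable section

/-- Euclidean space `ℝ^N`. -/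
abbrev Euc (N : ℕ) : Type := EuclideanSpace ℝ (Fin N)

/-- Divergence of a vector field on `ℝ^N`. -/
def vdiv {N : ℕ} (F : Euc N → Euc N) (x : Euc N) : ℝ :=
  ∑ i : Fin N, fderiv ℝ F x (EuclideanSpace.single i (1 : ℝ)) i

/-- The differential operator `-div(|x|^a ∇u)` evaluated at the point `x`. -/
def opL {N : ℕ} (a : ℝ) (u : Euc N → ℝ) (x : Euc N) : ℝ :=
  -vdiv (fun y => ‖y‖ ^ a • gradient u y) x

/-- `u` is a positive regular solution of `-div(|x|^a Du) = |x|^b u^p` on `Ω`: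
`u ∈ C²(Ω \ {0}) ∩ C¹(Ω)`, `u > 0` on `Ω`, and the equation holds pointwise on `Ω \ {0}`. -/
def IsPositiveRegularSolution {N : ℕ} (a b p : ℝ) (Ω : Set (Euc N)) (u : Euc N → ℝ) : Prop :=
  (∀ x ∈ Ω, 0 < u x) ∧
  ContDiffOn ℝ 2 u (Ω \ {0}) ∧
  ContDiffOn ℝ 1 u Ω ∧
  ∀ x ∈ Ω \ {0}, opL a u x = ‖x‖ ^ b * u x ^ p

/-- `Du` is the (componentwise) weak gradient of `u` on `Ω`. -/
def IsWeakGradientOn {N : ℕ} (Ω : Set (Euc N)) (u : Euc N → ℝ)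
    (Du : Euc N → Euc N) : Prop :=
  ∀ φ : Euc N → ℝ, ContDiff ℝ 1 φ → HasCompactSupport φ → tsupport φ ⊆ Ω →
    ∀ i : Fin N,
      ∫ x in Ω, u x * fderiv ℝ φ x (EuclideanSpace.single i (1 : ℝ))
        = -∫ x in Ω, Du x i * φ x

/-- `u` is a positive weak solution of `-div(|x|^a Du) = |x|^b u^p` on `Ω`:
`u > 0`, `u ∈ H¹_loc(Ω) ∩ L^∞_loc(Ω)` (witnessed by a weak gradient `Du` which is
locally square integrable together with `u`), and the weak formulation of the
equation holds against all `C¹` test functions compactly supported in `Ω`. -/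
def IsPositiveWeakSolution {N : ℕ} (a b p : ℝ) (Ω : Set (Euc N)) (u : Euc N → ℝ) : Prop :=
  (∀ x ∈ Ω, 0 < u x) ∧
  ∃ Du : Euc N → Euc N,
    IsWeakGradientOn Ω u Du ∧
    (∀ K : Set (Euc N), K ⊆ Ω → IsCompact K →
      IntegrableOn (fun x => u x ^ 2 + ‖Du x‖ ^ 2) K) ∧
    (∀ K : Set (Euc N), K ⊆ Ω → IsCompact K → ∃ C : ℝ, ∀ x ∈ K, u x ≤ C) ∧
    (∀ φ : Euc N → ℝ, ContDiff ℝ 1 φ → HasCompactSupport φ → tsupport φ ⊆ Ω →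
      ∫ x in Ω, ‖x‖ ^ a * ⟪Du x, gradient φ x⟫ = ∫ x in Ω, ‖x‖ ^ b * u x ^ p * φ x)

/-- `u` (with weak gradient `Du`) belongs to the weighted space `D_{a,b,q}(ℝ^N)`,
the closure of `C_c^∞(ℝ^N)` in the norm `‖u‖² = (∫|x|^b |u|^q)^{2/q} + ∫|x|^a |Du|²`. -/
def MemWeightedSobolev {N : ℕ} (a b q : ℝ) (u : Euc N → ℝ) (Du : Euc N → Euc N) : Prop :=
  Integrable (fun x : Euc N => ‖x‖ ^ b * |u x| ^ q) ∧
  Integrable (fun x : Euc N => ‖x‖ ^ a * ‖Du x‖ ^ 2) ∧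
  ∃ φ : ℕ → Euc N → ℝ,
    (∀ n, ContDiff ℝ (⊤ : ℕ∞) (φ n) ∧ HasCompactSupport (φ n)) ∧
    Tendsto (fun n => ∫ x, ‖x‖ ^ b * |φ n x - u x| ^ q) atTop (nhds 0) ∧
    Tendsto (fun n => ∫ x, ‖x‖ ^ a * ‖gradient (φ n) x - Du x‖ ^ 2) atTop (nhds 0)

/-- `u` is a finite energy solution of `-div(|x|^a Du) = |x|^b u^p` on `ℝ^N`:
a positive weak solution belonging to `D_{a,b,p+1}(ℝ^N)`. -/
def IsFiniteEnergySolution {N : ℕ} (a b p : ℝ) (u : Euc N → ℝ) : Prop :=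
  (∀ x : Euc N, 0 < u x) ∧
  ∃ Du : Euc N → Euc N,
    IsWeakGradientOn Set.univ u Du ∧
    (∀ K : Set (Euc N), IsCompact K →
      IntegrableOn (fun x => u x ^ 2 + ‖Du x‖ ^ 2) K) ∧
    (∀ K : Set (Euc N), IsCompact K → ∃ C : ℝ, ∀ x ∈ K, u x ≤ C) ∧
    (∀ φ : Euc N → ℝ, ContDiff ℝ 1 φ → HasCompactSupport φ →
      ∫ x, ‖x‖ ^ a * ⟪Du x, gradient φ x⟫ = ∫ x, ‖x‖ ^ b * u x ^ p * φ x) ∧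
    MemWeightedSobolev a b (p + 1) u Du

/-- `u ∈ H²_loc(ℝ^N)`: `u` has first and second order weak derivatives that are
locally square integrable. -/
def MemH2Loc {N : ℕ} (u : Euc N → ℝ) : Prop :=
  ∃ Du : Euc N → Euc N, ∃ D2u : Fin N → Euc N → Euc N,
    IsWeakGradientOn Set.univ u Du ∧
    (∀ i : Fin N, IsWeakGradientOn Set.univ (fun x => Du x i) (D2u i)) ∧
    ∀ K : Set (Euc N), IsCompact K →
      IntegrableOn (fun x => u x ^ 2 + ‖Du x‖ ^ 2 + ∑ i : Fin N, ‖D2u i x‖ ^ 2) K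

theorem const_on_pos (h : ℝ → ℝ) (hd : ∀ r, 0 < r → HasDerivAt h 0 r) :
    ∀ r s, 0 < r → 0 < s → h r = h s := by
  intro r s hr hs
  refine IsOpen.is_const_of_deriv_eq_zero (s := Set.Ioi 0) isOpen_Ioi isPreconnected_Ioi ?_ ?_ hr hs
  · intro x hx; exact (hd x hx).differentiableAt.differentiableWithinAt
  · intro x hx; exact (hd x hx).deriv

theorem pohozaev (m q : ℝ) (hm : 0 < m) (hq : 0 < q) (f f1 f2 : ℝ → ℝ)
    (hf : ∀ r, 0 < r → HasDerivAt f (f1 r) r) (hf1 : ∀ r, 0 < r → HasDerivAt f1 (f2 r) r)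
    (hpos : ∀ r, 0 ≤ r → 0 < f r)
    (hode : ∀ r, 0 < r → f2 r = -((m+1)/r * f1 r) - r^q / r^2 * f r ^ (1+2*q/m))
    (hcont : Tendsto f (nhdsWithin 0 (Set.Ioi 0)) (nhds (f 0)))
    (L : ℝ) (hbd : Tendsto f1 (nhdsWithin 0 (Set.Ioi 0)) (nhds L)) :
    ∀ r, 0 < r → m * f r * r * f1 r + r^2 * f1 r ^2 + m/(m+q) * r^q * f r ^ (2+2*q/m) = 0 := by
  set E : ℝ → ℝ := fun r =>
    r^m * (m * f r * r * f1 r + r^2 * f1 r ^2 + m/(m+q) * r^q * f r ^ (2+2*q/m)) with hE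
  have hd : ∀ r, 0 < r → HasDerivAt E 0 r := by
    intro r hr
    have h0 := hpos r hr.le
    have h1 := hf r hr
    have h2 := hf1 r hr
    have hid := hasDerivAt_id r
    have hA := (hasDerivAt_id r).rpow_const (p := m) (Or.inl hr.ne')
    have hB := (hasDerivAt_id r).rpow_const (p := q) (Or.inl hr.ne')
    have hC := h1.rpow_const (p := 2+2*q/m) (Or.inl h0.ne')
    have := hA.mul ((((h1.const_mul m).mul hid).mul h2).add ((hid.pow 2).mul (h2.pow 2)) |>.add
      ((hB.const_mul (m/(m+q))).mul hC))
    refine this.congr_deriv ?_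
    simp only [id, Pi.mul_apply, Pi.pow_apply, Pi.add_apply]
    rw [hode r hr, Real.rpow_sub_one hr.ne', Real.rpow_sub_one hr.ne',
      show 2 + 2*q/m - 1 = 1+2*q/m by ring]
    rw [show f r ^ (2+2*q/m) = f r * f r ^ (1+2*q/m) by
      rw [show 2 + 2*q/m = (1+2*q/m)+1 by ring, Real.rpow_add_one h0.ne', mul_comm]]
    generalize f r ^ (1+2*q/m) = X
    generalize r^m = R
    generalize r^q = Q
    have : m + q ≠ 0 := by positivity
    field_simp
    ring
  have hlim : Tendsto E (nhdsWithin 0 (Set.Ioi 0)) (nhds 0) := by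
    have hid : Tendsto (fun r : ℝ => r) (nhdsWithin 0 (Set.Ioi 0)) (nhds 0) :=
      tendsto_nhdsWithin_of_tendsto_nhds tendsto_id
    have hA := hid.rpow_const (p := m) (Or.inr hm.le)
    have hB := hid.rpow_const (p := q) (Or.inr hq.le)
    have hC := hcont.rpow_const (p := 2+2*q/m) (Or.inl (hpos 0 le_rfl).ne')
    have := hA.mul (((((hcont.const_mul m).mul hid).mul hbd).add ((hid.pow 2).mul (hbd.pow 2))).add
      ((hB.const_mul (m/(m+q))).mul hC))
    rw [Real.zero_rpow hm.ne', zero_mul] at this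
    exact this
  intro r hr
  have hc := const_on_pos E hd
  have hEr : E r = 0 := by
    refine tendsto_nhds_unique (f := E) ?_ hlim
    refine tendsto_const_nhds.congr' ?_
    filter_upwards [self_mem_nhdsWithin] with s hs
    exact hc r s hr hs
  have : r^m ≠ 0 := (Real.rpow_pos_of_pos hr m).ne'
  exact (mul_eq_zero.mp hEr).resolve_left this

theorem ode_class (m q : ℝ) (hm : 0 < m) (hq : 0 < q) (f f1 f2 : ℝ → ℝ)
    (hf : ∀ r, 0 < r → HasDerivAt f (f1 r) r) (hf1 : ∀ r, 0 < r → HasDerivAt f1 (f2 r) r)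
    (hpos : ∀ r, 0 ≤ r → 0 < f r)
    (hode : ∀ r, 0 < r → f2 r = -((m+1)/r * f1 r) - r^q / r^2 * f r ^ (1+2*q/m))
    (hcont : Tendsto f (nhdsWithin 0 (Set.Ioi 0)) (nhds (f 0)))
    (L : ℝ) (hbd : Tendsto f1 (nhdsWithin 0 (Set.Ioi 0)) (nhds L)) :
    ∃ c : ℝ, 0 < c ∧ ∃ lam : ℝ, 0 < lam ∧ ∀ r, 0 ≤ r →
      f r = c * (1 + (lam * r) ^ q) ^ (-m / q) := by
  have hP := pohozaev m q hm hq f f1 f2 hf hf1 hpos hode hcont L hbd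
  have hneg : ∀ r, 0 < r → f1 r < 0 := by
    intro r hr
    have h0 := hpos r hr.le
    have h1 := hP r hr
    by_contra hcon
    push Not at hcon
    have : 0 ≤ m * f r * r * f1 r := by positivity
    have : 0 < m/(m+q) * r^q * f r ^ (2+2*q/m) := by positivity
    have : 0 ≤ r^2 * f1 r ^2 := by positivity
    linarith
  -- derivative of w
  set w : ℝ → ℝ := fun r => f r ^ (-(q/m)) with hw
  set w1 : ℝ → ℝ := fun r => -(q/m) * f r ^ (-(q/m) - 1) * f1 r with hw1
  have hwd : ∀ r, 0 < r → HasDerivAt w (w1 r) r := by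
    intro r hr
    have := (hf r hr).rpow_const (p := -(q/m)) (Or.inl (hpos r hr.le).ne')
    refine this.congr_deriv ?_
    simp only [hw1]; ring
  have hkd : ∀ r, 0 < r → HasDerivAt (fun r => r * (r^q)⁻¹ * w1 r) 0 r := by
    intro r hr
    have h0 := hpos r hr.le
    have hB := (hasDerivAt_id r).rpow_const (p := q) (Or.inl hr.ne')
    have hrq : r^q ≠ 0 := (Real.rpow_pos_of_pos hr q).ne'
    have hW := ((hf r hr).rpow_const (p := -(q/m)-1) (Or.inl h0.ne')).const_mul (-(q/m))
    have := ((hasDerivAt_id r).mul (hB.inv hrq)).mul (hW.mul (hf1 r hr))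
    refine this.congr_deriv ?_
    simp only [id, Pi.mul_apply, Pi.pow_apply, Pi.add_apply, Pi.inv_apply]
    have hp := hP r hr
    rw [show f r ^ (2+2*q/m) = f r * f r ^ (1+2*q/m) by
      rw [show 2 + 2*q/m = (1+2*q/m)+1 by ring, Real.rpow_add_one h0.ne', mul_comm]] at hp
    rw [hode r hr, Real.rpow_sub_one hr.ne', Real.rpow_sub_one h0.ne' (-(q/m)-1)]
    generalize f r ^ (1+2*q/m) = X at *
    generalize f r ^ (-(q/m)-1) = Y at *
    generalize r^q = Q at *
    have : m + q ≠ 0 := by positivity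
    field_simp
    field_simp at hp
    linear_combination (Y * q) * hp
  have hk := const_on_pos _ hkd
  set K := (1:ℝ) * (1^q)⁻¹ * w1 1 with hK
  have hKpos : 0 < K := by
    have h1 := hneg 1 one_pos
    have h0 := hpos 1 zero_le_one
    have : 0 < f 1 ^ (-(q/m)-1) := by positivity
    simp only [hK, hw1, Real.one_rpow]
    have : 0 < q/m * f 1 ^ (-(q/m)-1) * (- f1 1) := by
      have : 0 < - f1 1 := by linarith
      positivity
    linarith
  have hd2 : ∀ r, 0 < r → HasDerivAt (fun r => w r - K/q * r^q) 0 r := by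
    intro r hr
    have hB := (hasDerivAt_id r).rpow_const (p := q) (Or.inl hr.ne')
    refine ((hwd r hr).sub (hB.const_mul (K/q))).congr_deriv ?_
    simp only [id]
    have h := hk r 1 hr one_pos
    rw [← hK] at h
    rw [← h, Real.rpow_sub_one hr.ne']
    have hrq : r^q ≠ 0 := (Real.rpow_pos_of_pos hr q).ne'
    field_simp
    ring
  have hc2 := const_on_pos _ hd2
  have hA : 0 < w 0 := Real.rpow_pos_of_pos (hpos 0 le_rfl) _
  have hwr : ∀ r, 0 ≤ r → w r = w 0 + K/q * r^q := by
    intro r hr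
    rcases hr.eq_or_lt with rfl | hr
    · rw [Real.zero_rpow hq.ne']; ring
    have hid : Tendsto (fun r : ℝ => r) (nhdsWithin 0 (Set.Ioi 0)) (nhds 0) :=
      tendsto_nhdsWithin_of_tendsto_nhds tendsto_id
    have hB := hid.rpow_const (p := q) (Or.inr hq.le)
    have hC := hcont.rpow_const (p := -(q/m)) (Or.inl (hpos 0 le_rfl).ne')
    have hl := hC.sub (hB.const_mul (K/q))
    rw [Real.zero_rpow hq.ne', mul_zero, sub_zero] at hl
    have : w r - K/q * r^q = w 0 := by
      refine tendsto_nhds_unique (f := fun r => w r - K/q * r^q) ?_ hl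
      refine tendsto_const_nhds.congr' ?_
      filter_upwards [self_mem_nhdsWithin] with s hs
      exact hc2 r s hr hs
    linarith
  refine ⟨(w 0) ^ (-m/q), by positivity, (K/q/w 0)^(1/q), by positivity, ?_⟩
  intro r hr
  have hfr : f r = (w r) ^ (-m/q) := by
    simp only [hw]
    rw [← Real.rpow_mul (hpos r hr).le, show -(q/m) * (-m/q) = 1 by field_simp, Real.rpow_one]
  rw [hfr, hwr r hr]
  generalize w 0 = W at hA ⊢
  rw [Real.mul_rpow (by positivity) hr, ← Real.rpow_mul (by positivity),
    one_div_mul_cancel hq.ne', Real.rpow_one, ← Real.mul_rpow hA.le (by positivity)]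
  congr 1
  field_simp

theorem hasFDerivAt_norm_ne {N : ℕ} (x : Euc N) (hx : x ≠ 0) :
    HasFDerivAt (fun y : Euc N => ‖y‖) (‖x‖⁻¹ • innerSL ℝ x) x := by
  have hn : ‖x‖ ≠ 0 := norm_ne_zero_iff.mpr hx
  have h := (hasStrictFDerivAt_norm_sq x).hasFDerivAt.sqrt (pow_ne_zero 2 hn)
  simp only [Real.sqrt_sq (norm_nonneg _)] at h
  refine h.congr_fderiv ?_
  ext v
  simp
  field_simp

theorem vdiv_radial {N : ℕ} (g : ℝ → ℝ) (g' : ℝ) (x : Euc N) (hx : x ≠ 0)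
    (hg : HasDerivAt g g' ‖x‖) :
    vdiv (fun y => g ‖y‖ • y) x = N * g ‖x‖ + ‖x‖ * g' := by
  have hn : ‖x‖ ≠ 0 := norm_ne_zero_iff.mpr hx
  have h1 : HasFDerivAt (fun y : Euc N => g ‖y‖) (g' • (‖x‖⁻¹ • innerSL ℝ x)) x :=
    hg.comp_hasFDerivAt x (hasFDerivAt_norm_ne x hx)
  have h2 := h1.smul (hasFDerivAt_id x)
  unfold vdiv
  have h3 : fderiv ℝ (fun y : Euc N => g ‖y‖ • y) x = _ := h2.fderiv
  rw [h3]
  have : ∀ i : Fin N, (g ‖x‖ • ContinuousLinearMap.id ℝ (Euc N) +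
      (g' • (‖x‖⁻¹ • innerSL ℝ x)).smulRight (id x)) (EuclideanSpace.single i (1 : ℝ)) i
      = g ‖x‖ + g' * ‖x‖⁻¹ * (x i)^2 := by
    intro i
    simp [EuclideanSpace.inner_single_right]
    ring
  rw [Finset.sum_congr rfl (fun i _ => this i), Finset.sum_add_distrib, ← Finset.mul_sum,
    ← EuclideanSpace.real_norm_sq_eq]
  simp
  field_simp

theorem radial_ode {N : ℕ} (a : ℝ) (u : Euc N → ℝ) (f f1 f2 : ℝ → ℝ)
    (huf : ∀ x, u x = f ‖x‖)
    (hf : ∀ r, 0 < r → HasDerivAt f (f1 r) r) (hf1 : ∀ r, 0 < r → HasDerivAt f1 (f2 r) r)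
    (x : Euc N) (hx : x ≠ 0) :
    opL a u x = - (‖x‖^a * (f2 ‖x‖ + (N - 1 + a) / ‖x‖ * f1 ‖x‖)) := by
  have hgrad : ∀ y : Euc N, y ≠ 0 → gradient u y = (f1 ‖y‖ * ‖y‖⁻¹) • y := by
    intro y hy
    have h1 : HasFDerivAt u (f1 ‖y‖ • (‖y‖⁻¹ • innerSL ℝ y)) y := by
      have := (hf ‖y‖ (norm_pos_iff.mpr hy)).comp_hasFDerivAt y (hasFDerivAt_norm_ne y hy)
      rwa [show f ∘ (fun y : Euc N => ‖y‖) = u from (funext huf).symm] at this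
    apply HasGradientAt.gradient
    rw [hasGradientAt_iff_hasFDerivAt]
    refine h1.congr_fderiv ?_
    ext v
    simp [inner_smul_left]
    ring
  have hev : (fun y => ‖y‖ ^ a • gradient u y) =ᶠ[nhds x]
      (fun y => (fun r => r^a * (f1 r * r⁻¹)) ‖y‖ • y) := by
    filter_upwards [isOpen_ne.mem_nhds hx] with y hy
    rw [hgrad y hy, smul_smul]
  have hr := norm_pos_iff.mpr hx
  have hg := ((hasDerivAt_id ‖x‖).rpow_const (p := a) (Or.inl hr.ne')).mul
    ((hf1 _ hr).mul (hasDerivAt_inv hr.ne'))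
  have hv := vdiv_radial _ _ x hx hg
  have : vdiv (fun y => ‖y‖ ^ a • gradient u y) x =
    vdiv (fun y => (fun r => r^a * (f1 r * r⁻¹)) ‖y‖ • y) x := by
    unfold vdiv; rw [hev.fderiv_eq]
  unfold opL
  rw [this]
  refine (congrArg Neg.neg hv).trans ?_
  simp only [id, Pi.mul_apply]
  rw [Real.rpow_sub_one hr.ne']
  field_simp
  ring

/-- In the critical case, every radially symmetric positive regular
solution on `ℝ^N` has the form `c (1 + (λ|x|)^{2+b-a})^{-(N-2+a)/(2+b-a)}`. -/
theorem radial_solution_classification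
    (N : ℕ) (a b p : ℝ) (hN : 3 ≤ N)
    (hba : a - 2 < b) (haN : -(N : ℝ) < a - 2)
    (hp : p = ((N : ℝ) + 2 + 2 * b - a) / ((N : ℝ) - 2 + a))
    (u : Euc N → ℝ)
    (hrad : ∀ x y : Euc N, ‖x‖ = ‖y‖ → u x = u y)
    (hu : IsPositiveRegularSolution a b p Set.univ u) :
    ∃ c : ℝ, 0 < c ∧ ∃ lam : ℝ, 0 < lam ∧
      ∀ x : Euc N,
        u x = c * (1 + (lam * ‖x‖) ^ (2 + b - a)) ^ (-((N : ℝ) - 2 + a) / (2 + b - a)) := by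
  obtain ⟨hpos, hC2, hC1, heq⟩ := hu
  have hC1 : ContDiff ℝ 1 u := contDiffOn_univ.mp hC1
  set e : Euc N := EuclideanSpace.single ⟨0, by omega⟩ 1 with he
  have hne : ‖e‖ = 1 := by simp [he]
  have hnr : ∀ r : ℝ, 0 ≤ r → ‖r • e‖ = r := by
    intro r hr; rw [norm_smul, hne, mul_one, Real.norm_of_nonneg hr]
  set f : ℝ → ℝ := fun r => u (r • e) with hfdef
  set f1 : ℝ → ℝ := fun r => fderiv ℝ u (r • e) e with hf1def
  have huf : ∀ x, u x = f ‖x‖ := fun x => hrad _ _ (hnr _ (norm_nonneg x)).symm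
  have hline : ∀ r : ℝ, HasDerivAt (fun r : ℝ => r • e) e r := by
    intro r; simpa using (hasDerivAt_id r).smul_const e
  have hf : ∀ r, 0 < r → HasDerivAt f (f1 r) r := by
    intro r _
    exact ((hC1.differentiable one_ne_zero) (r • e)).hasFDerivAt.comp_hasDerivAt r (hline r)
  have hcf1 : Continuous f1 := by
    have := hC1.continuous_fderiv one_ne_zero
    have h2 : Continuous (fun r : ℝ => r • e) := by fun_prop
    exact (this.comp h2).clm_apply continuous_const
  have hf1 : ∀ r, 0 < r → HasDerivAt f1 (deriv f1 r) r := by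
    intro r hr
    have hre : r • e ≠ 0 := by rw [← norm_ne_zero_iff, hnr r hr.le]; exact hr.ne'
    have h2 : ContDiffAt ℝ 2 u (r • e) := by
      apply hC2.contDiffAt
      have : (Set.univ \ {0} : Set (Euc N)) = {x | x ≠ 0} := by ext; simp
      rw [this]
      exact isOpen_ne.mem_nhds hre
    have h3 : ContDiffAt ℝ 1 (fderiv ℝ u) (r • e) := h2.fderiv_right (by norm_num)
    have h4 := (h3.differentiableAt one_ne_zero).hasFDerivAt.comp_hasDerivAt r (hline r)
    have h5 : DifferentiableAt ℝ f1 r :=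
      (h4.clm_apply (hasDerivAt_const r e)).differentiableAt
    exact h5.hasDerivAt
  have hm : 0 < (N : ℝ) - 2 + a := by linarith
  have hq : 0 < 2 + b - a := by linarith
  have hpp : p = 1 + 2 * (2 + b - a) / ((N : ℝ) - 2 + a) := by
    rw [hp]; field_simp; ring
  have hcf : Continuous f := by
    have h2 : Continuous (fun r : ℝ => r • e) := by fun_prop
    exact hC1.continuous.comp h2
  obtain ⟨c, hc, lam, hlam, h⟩ := ode_class ((N : ℝ) - 2 + a) (2 + b - a) hm hq f f1 (deriv f1)
    hf hf1 (fun r _ => hpos _ trivial) (by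
      intro r hr
      have hre : r • e ≠ 0 := by rw [← norm_ne_zero_iff, hnr r hr.le]; exact hr.ne'
      have h1 := heq (r • e) ⟨trivial, hre⟩
      rw [radial_ode a u f f1 (deriv f1) huf hf hf1 (r • e) hre, hnr r hr.le, hpp] at h1
      rw [show 2 + b - a = (b - a) + (2 : ℕ) by push_cast; ring, Real.rpow_add_natCast hr.ne',
        Real.rpow_sub hr]
      rw [show (b - a) + (2 : ℕ) = 2 + b - a by push_cast; ring]
      change _ = _ * f r ^ _ at h1
      generalize f r ^ (1 + 2 * (2 + b - a) / ((N : ℝ) - 2 + a)) = X at *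
      have ha : r ^ a ≠ 0 := (Real.rpow_pos_of_pos hr a).ne'
      field_simp
      field_simp at h1
      linear_combination (-1 : ℝ) * h1)
    (hcf.continuousAt.mono_left nhdsWithin_le_nhds) (f1 0)
    (hcf1.continuousAt.mono_left nhdsWithin_le_nhds)
  exact ⟨c, hc, lam, hlam, fun x => by rw [huf x]; exact h _ (norm_nonneg x)⟩
end
end

section
/- Let N ≥ 3 be an integer, p > 1, a, b ∈ ℝ, and set γ := (2 + b − a)/(p − 1). If u ∈ C^∞(ℝ^N \ {0}) is positive and satisfies −div(|x|^a Du) = |x|^b u^p pointwise on ℝ^N \ {0}, then the function V := γu + x·Du satisfies the linearized equation −div(|x|^a DV) = p |x|^b u^{p−1} V pointwise on ℝ^N \ {0}. -/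
open MeasureTheory Real Filter
open scoped BigOperators ENNReal NNReal RealInnerProductSpace

noncomputable section

lemma aux_vdiv_euler {N : ℕ} (G : Euc N → Euc N) (x : Euc N) (hG : ContDiffAt ℝ (⊤ : ℕ∞) G x) :
    DifferentiableAt ℝ (fun y => fderiv ℝ G y y) x ∧
    vdiv (fun y => fderiv ℝ G y y) x = vdiv G x + fderiv ℝ (vdiv G) x x := by
  have h1 : ContDiffAt ℝ (⊤ : ℕ∞) (fderiv ℝ G) x := hG.fderiv_right (by simp)
  have h2 : HasFDerivAt (fderiv ℝ G) (fderiv ℝ (fderiv ℝ G) x) x :=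
    (h1.differentiableAt (by simp)).hasFDerivAt
  have h3 := h2.clm_apply (hasFDerivAt_id x)
  have hsymm : IsSymmSndFDerivAt ℝ G x := hG.isSymmSndFDerivAt (by simpa using WithTop.coe_le_coe.2 (le_top (a := (2 : ℕ∞))))
  refine ⟨h3.differentiableAt, ?_⟩
  have h4 : HasFDerivAt (vdiv G) (∑ i : Fin N, (EuclideanSpace.proj i : Euc N →L[ℝ] ℝ).comp
      ((fderiv ℝ (fderiv ℝ G) x).flip (EuclideanSpace.single i (1 : ℝ)))) x := by
    unfold vdiv
    apply HasFDerivAt.fun_sum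
    intro i _
    have h5 := h2.clm_apply (hasFDerivAt_const (EuclideanSpace.single i (1 : ℝ)) x)
    have h6 := (EuclideanSpace.proj i : Euc N →L[ℝ] ℝ).hasFDerivAt.comp x h5
    refine h6.congr_fderiv ?_
    rw [ContinuousLinearMap.comp_zero, zero_add]
  rw [h4.fderiv]
  unfold vdiv
  have h3' : fderiv ℝ (fun y => fderiv ℝ G y y) x = _ := h3.fderiv
  rw [h3', _root_.sum_apply, ← Finset.sum_add_distrib]
  refine Finset.sum_congr rfl fun i _ => ?_
  simp [hsymm x (EuclideanSpace.single i (1 : ℝ))]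
  try rw [hsymm.eq]

lemma aux_grad_smooth {N : ℕ} (u : Euc N → ℝ) (x : Euc N) (hu : ContDiffAt ℝ (⊤ : ℕ∞) u x) :
    ContDiffAt ℝ (⊤ : ℕ∞) (gradient u) x := by
  have h1 : ContDiffAt ℝ (⊤ : ℕ∞) (fderiv ℝ u) x := hu.fderiv_right (by simp)
  exact (InnerProductSpace.toDual ℝ (Euc N)).symm.toContinuousLinearEquiv.contDiff.contDiffAt.comp x h1

lemma aux_inner_grad {N : ℕ} (u : Euc N → ℝ) (y v : Euc N) :
    ⟪v, gradient u y⟫ = fderiv ℝ u y v := by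
  rw [real_inner_comm]
  simp [gradient]

lemma aux_gradV {N : ℕ} (u : Euc N → ℝ) (γ : ℝ) (x : Euc N) (hu : ContDiffAt ℝ (⊤ : ℕ∞) u x) :
    gradient (fun y : Euc N => γ * u y + ⟪y, gradient u y⟫) x
      = (γ + 1) • gradient u x + fderiv ℝ (gradient u) x x := by
  have h1 : ContDiffAt ℝ (⊤ : ℕ∞) (fderiv ℝ u) x := hu.fderiv_right (by simp)
  have h2 : HasFDerivAt (fderiv ℝ u) (fderiv ℝ (fderiv ℝ u) x) x :=
    (h1.differentiableAt (by simp)).hasFDerivAt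
  have hsymm : IsSymmSndFDerivAt ℝ u x := hu.isSymmSndFDerivAt (by simpa using WithTop.coe_le_coe.2 (le_top (a := (2 : ℕ∞))))
  have h0 : HasFDerivAt u (fderiv ℝ u x) x := (hu.differentiableAt (by simp)).hasFDerivAt
  have hV := (h0.const_mul γ).add (h2.clm_apply (hasFDerivAt_id x))
  have hfun : (fun y : Euc N => γ * u y + ⟪y, gradient u y⟫)
      = (fun y => γ * u y) + fun y => fderiv ℝ u y (id y) := by
    funext y
    simp [aux_inner_grad]
  have hg : DifferentiableAt ℝ (gradient u) x :=
    (aux_grad_smooth u x hu).differentiableAt (by simp)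
  refine ext_inner_left ℝ fun v => ?_
  rw [aux_inner_grad, hfun, hV.fderiv, inner_add_right, inner_smul_right, aux_inner_grad]
  have h5 : HasFDerivAt (fun y => ⟪v, gradient u y⟫) ((innerSL ℝ v).comp (fderiv ℝ (gradient u) x)) x :=
    (innerSL ℝ v).hasFDerivAt.comp x hg.hasFDerivAt
  have h6 : HasFDerivAt (fun y => ⟪v, gradient u y⟫)
      ((fderiv ℝ (fderiv ℝ u) x).flip v) x := by
    have h8 := h2.clm_apply (hasFDerivAt_const v x)
    simp only [aux_inner_grad]
    refine h8.congr_fderiv ?_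
    rw [ContinuousLinearMap.comp_zero, zero_add]
  have h7 := congrArg (fun L => L x) (h5.unique h6)
  simp at h7
  rw [h7]
  simp [hsymm.eq v x]
  ring

lemma aux_norm_rpow {N : ℕ} (a : ℝ) (x : Euc N) (hx : x ≠ 0) :
    ContDiffAt ℝ (⊤ : ℕ∞) (fun y : Euc N => ‖y‖ ^ a) x ∧
    fderiv ℝ (fun y : Euc N => ‖y‖ ^ a) x x = a * ‖x‖ ^ a := by
  have hn : 0 < ‖x‖ := norm_pos_iff.mpr hx
  have h1 : ContDiffAt ℝ (⊤ : ℕ∞) (fun y : Euc N => ‖y‖ ^ a) x :=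
    (contDiffAt_norm ℝ hx).rpow_const_of_ne hn.ne'
  refine ⟨h1, ?_⟩
  have hd : DifferentiableAt ℝ (fun y : Euc N => ‖y‖) x :=
    (contDiffAt_norm ℝ hx (n := 1)).differentiableAt (by simp)
  have h2 := hd.hasFDerivAt.rpow_const (p := a) (Or.inl hn.ne')
  rw [h2.fderiv]
  have h3 : fderiv ℝ (fun y : Euc N => ‖y‖) x x = ‖x‖ := hd.fderiv_norm_self
  simp [h3, Real.rpow_sub_one hn.ne']
  field_simp

/-- If `u ∈ C^∞(ℝ^N \ {0})` is positive and solves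
`-div(|x|^a Du) = |x|^b u^p` on `ℝ^N \ {0}`, then `V = γu + x·Du` solves the
linearized equation `-div(|x|^a DV) = p |x|^b u^{p-1} V` on `ℝ^N \ {0}`. -/
theorem linearized_equation
    (N : ℕ) (a b p : ℝ) (hN : 3 ≤ N) (hp : 1 < p)
    (γ : ℝ) (hγ : γ = (2 + b - a) / (p - 1))
    (u : Euc N → ℝ)
    (hreg : ContDiffOn ℝ (⊤ : ℕ∞) u {(0 : Euc N)}ᶜ)
    (hpos : ∀ x : Euc N, x ≠ 0 → 0 < u x)
    (heq : ∀ x : Euc N, x ≠ 0 → opL a u x = ‖x‖ ^ b * u x ^ p) :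
    ∀ x : Euc N, x ≠ 0 →
      opL a (fun y : Euc N => γ * u y + ⟪y, gradient u y⟫) x
        = p * ‖x‖ ^ b * u x ^ (p - 1) * (γ * u x + ⟪x, gradient u x⟫) := by
  intro x hx
  have hmem : ∀ y : Euc N, y ≠ 0 → {(0 : Euc N)}ᶜ ∈ nhds y := fun y hy =>
    isOpen_compl_singleton.mem_nhds hy
  have hu : ∀ y : Euc N, y ≠ 0 → ContDiffAt ℝ (⊤ : ℕ∞) u y := fun y hy =>
    hreg.contDiffAt (hmem y hy)
  set G : Euc N → Euc N := fun y => ‖y‖ ^ a • gradient u y with hGdef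
  have hG : ∀ y : Euc N, y ≠ 0 → ContDiffAt ℝ (⊤ : ℕ∞) G y := fun y hy =>
    (aux_norm_rpow a y hy).1.smul (aux_grad_smooth u y (hu y hy))
  have hEG : ∀ y : Euc N, y ≠ 0 →
      fderiv ℝ G y y = a • G y + ‖y‖ ^ a • fderiv ℝ (gradient u) y y := by
    intro y hy
    have hr := aux_norm_rpow a y hy
    have h1 := (hr.1.differentiableAt (by simp)).hasFDerivAt.smul
      ((aux_grad_smooth u y (hu y hy)).differentiableAt (by simp)).hasFDerivAt
    have h1' : fderiv ℝ G y = _ := h1.fderiv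
    rw [h1']
    simp [hr.2, hGdef, smul_smul, add_comm]
  have hE : (fun y => ‖y‖ ^ a • gradient (fun y : Euc N => γ * u y + ⟪y, gradient u y⟫) y)
      =ᶠ[nhds x] fun y => (γ + 1 - a) • G y + fderiv ℝ G y y := by
    filter_upwards [hmem x hx] with y hy
    rw [aux_gradV u γ y (hu y hy), hEG y hy]
    simp only [hGdef]
    module
  obtain ⟨hd, hdiv⟩ := aux_vdiv_euler G x (hG x hx)
  have hGd : DifferentiableAt ℝ G x := (hG x hx).differentiableAt (by simp)
  have hF : vdiv G =ᶠ[nhds x] fun y => -(‖y‖ ^ b * u y ^ p) := by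
    filter_upwards [hmem x hx] with y hy
    have := heq y hy
    unfold opL at this
    linarith
  have hux := hpos x hx
  have hFd : fderiv ℝ (vdiv G) x x
      = -(b * ‖x‖ ^ b * u x ^ p + ‖x‖ ^ b * (p * u x ^ (p - 1) * fderiv ℝ u x x)) := by
    rw [hF.fderiv_eq]
    have hr := aux_norm_rpow b x hx
    have h1 := (hr.1.differentiableAt (by simp)).hasFDerivAt.mul
      (((hu x hx).differentiableAt (by simp)).hasFDerivAt.rpow_const (p := p) (Or.inl hux.ne'))
    have h2 : fderiv ℝ (fun y => -(‖y‖ ^ b * u y ^ p)) x = _ := h1.neg.fderiv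
    rw [h2]
    simp [hr.2]
    ring
  have hsplit : vdiv (fun y => (γ + 1 - a) • G y + fderiv ℝ G y y) x
      = (γ + 1 - a) * vdiv G x + vdiv (fun y => fderiv ℝ G y y) x := by
    unfold vdiv
    rw [Finset.mul_sum, ← Finset.sum_add_distrib]
    have h1 : fderiv ℝ (fun y => (γ + 1 - a) • G y + fderiv ℝ G y y) x = _ :=
      ((hGd.hasFDerivAt.const_smul (γ + 1 - a)).add hd.hasFDerivAt).fderiv
    rw [h1]
    simp
  have hcong : vdiv (fun y => ‖y‖ ^ a •
      gradient (fun y : Euc N => γ * u y + ⟪y, gradient u y⟫) y) x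
      = vdiv (fun y => (γ + 1 - a) • G y + fderiv ℝ G y y) x := by
    unfold vdiv
    rw [hE.fderiv_eq]
  have hFx : vdiv G x = -(‖x‖ ^ b * u x ^ p) := hF.eq_of_nhds
  unfold opL
  rw [hcong, hsplit, hdiv, hFd, hFx, aux_inner_grad]
  have hup : u x ^ p = u x ^ (p - 1) * u x := by
    rw [Real.rpow_sub_one hux.ne']
    field_simp
  have hγ' : 2 + b - a = γ * (p - 1) := by
    rw [hγ]
    have : p - 1 ≠ 0 := by linarith
    field_simp
  rw [hup]
  linear_combination (‖x‖ ^ b * (u x ^ (p - 1) * u x)) * hγ'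
end
end
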